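/- For the noisy-POST(α,η) channel, the input distribution P₂(x|y') defined by P₂(X=1|Y'=0) = P₁(u₂|Y'=0)+P₁(u₃|Y'=0) and P₂(X=0|Y'=1) = P₁(u₀|Y'=1)+η·P₁(u₁|Y'=1)+(1-η)·P₁(u₂|Y'=1) induces the same output transition probability: P₂(y|y') = P₁(y|y') for all y',y ∈ {0,1}. -/

import Mathlib

open Finset

/-- The noisy-POST(α,η) channel law `Q(y|x,s')` (ZS structure):
if `x = s'` then `y = x` deterministically; for `s' = 0, x = 1` a Z channel with
`Q(1|1,0) = 1-α`; for `s' = 1, x = 0` an S channel with `Q(0|0,1) = 1-α`. -/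
noncomputable def Qch (α : ℝ) (x s' y : Bool) : ℝ :=
  if x = s' then (if y = x then 1 else 0)
  else if s' = false then (if y = true then 1 - α else α)
  else (if y = false then 1 - α else α)

/-- The noisy state evolution `Q(s|y)`: `S = 0` surely if `Y = 0`; if `Y = 1` then
`S = 1` w.p. `1-η` and `S = 0` w.p. `η`. -/
noncomputable def Qst (η : ℝ) (y s : Bool) : ℝ :=
  if y = false then (if s = false then 1 else 0)
  else (if s = false then η else 1 - η)

/-- The four strategies `u : Fin 4` mapping `s'` to `x`:
`u₀ ↦ (0,0)`, `u₁ ↦ (0,1)`, `u₂ ↦ (1,0)`, `u₃ ↦ (1,1)`. -/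
def strat (u : Fin 4) (s' : Bool) : Bool :=
  match u with
  | 0 => false
  | 1 => s'
  | 2 => !s'
  | 3 => true

/-- Output kernel induced by a strategy distribution `P₁(u|y')`. -/
noncomputable def outKernelU (α η : ℝ) (P₁ : Bool → Fin 4 → ℝ) (y' y : Bool) : ℝ :=
  ∑ s' : Bool, ∑ u : Fin 4, Qst η y' s' * P₁ y' u * Qch α (strat u s') s' y

/-- Output kernel induced by an input distribution `P₂(x|y')`. -/
noncomputable def outKernelX (α η : ℝ) (P₂ : Bool → Bool → ℝ) (y' y : Bool) : ℝ :=
  ∑ s' : Bool, ∑ x : Bool, Qst η y' s' * P₂ y' x * Qch α x s' y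

/-!
The channel is a mixture: it outputs the input `x` with probability `1 - α` and the state `s'` with
probability `α`, so its law is the sum of a function of `(x, y)` and a function of `(s', y)`. Hence
the output law given `y'` depends only on the marginal laws of the input and of the state, not on
how the two are coupled. Replacing a strategy by an input that is independent of the state and has
the same marginal law therefore preserves the output kernel, and `P₂(·|y')` is precisely this
marginal law.
-/

section InducedInput

variable {R S U X : Type*} [CommSemiring R] [Fintype S] [Fintype U] [DecidableEq X]

/-- The law of the input `f u s` when the state `s` has law `q` and the strategy `u`, which acts on
states through `f`, is drawn from `p` independently of `s`. -/
def inducedInput (q : S → R) (f : U → S → X) (p : U → R) (x : X) : R :=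
  ∑ s, ∑ u with f u s = x, q s * p u

theorem inducedInput_nonneg [PartialOrder R] [IsOrderedRing R] {q : S → R} {p : U → R}
    (hq : ∀ s, 0 ≤ q s) (hp : ∀ u, 0 ≤ p u) (f : U → S → X) (x : X) :
    0 ≤ inducedInput q f p x :=
  sum_nonneg fun s _ => sum_nonneg fun u _ => mul_nonneg (hq s) (hp u)

variable [Fintype X]

theorem sum_inducedInput_mul (q : S → R) (f : U → S → X) (p : U → R) (g : X → R) :
    ∑ x, inducedInput q f p x * g x = ∑ s, ∑ u, q s * p u * g (f u s) := by
  simp only [inducedInput, sum_mul]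
  rw [sum_comm]
  refine sum_congr rfl fun s _ => ?_
  rw [← sum_fiberwise univ fun u => f u s]
  refine sum_congr rfl fun x _ => sum_congr rfl fun u hu => ?_
  rw [(mem_filter.mp hu).2]

theorem sum_inducedInput (q : S → R) (f : U → S → X) (p : U → R) :
    ∑ x, inducedInput q f p x = (∑ s, q s) * ∑ u, p u := by
  simpa [sum_mul_sum] using sum_inducedInput_mul q f p 1

theorem sum_sum_inducedInput_mul_add {q : S → R} (hq : ∑ s, q s = 1) (f : U → S → X) (p : U → R)
    (a : X → R) (b : S → R) :
    ∑ s, ∑ x, q s * inducedInput q f p x * (a x + b s) =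
      ∑ s, ∑ u, q s * p u * (a (f u s) + b s) := by
  have input_part : ∑ s, ∑ x, q s * inducedInput q f p x * a x =
      ∑ s, ∑ u, q s * p u * a (f u s) := by
    simp only [mul_assoc, ← mul_sum, ← sum_mul, hq, one_mul]
    simpa only [mul_assoc, ← mul_sum] using sum_inducedInput_mul q f p a
  have state_part : ∑ s, ∑ x, q s * inducedInput q f p x * b s =
      ∑ s, ∑ u, q s * p u * b s := by
    simp only [← sum_mul, ← mul_sum, sum_inducedInput, hq, one_mul]
  simp only [mul_add, sum_add_distrib, input_part, state_part]

theorem noisyPost_kernel_preserved_general [PartialOrder R] [IsOrderedRing R] {Y' Y : Type*}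
    {q : Y' → S → R} (hq_nonneg : ∀ y' s, 0 ≤ q y' s) (hq_sum : ∀ y', ∑ s, q y' s = 1)
    {W : X → S → Y → R} {A : X → Y → R} {B : S → Y → R}
    (hW : ∀ x s y, W x s y = A x y + B s y) (f : U → S → X)
    {P₁ : Y' → U → R} (hP₁_nonneg : ∀ y' u, 0 ≤ P₁ y' u) (hP₁_sum : ∀ y', ∑ u, P₁ y' u = 1)
    {P₂ : Y' → X → R} (hP₂ : ∀ y' x, P₂ y' x = inducedInput (q y') f (P₁ y') x) :
    ((∀ y' x, 0 ≤ P₂ y' x) ∧ ∀ y', ∑ x, P₂ y' x = 1) ∧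
      ∀ y' y, ∑ s, ∑ x, q y' s * P₂ y' x * W x s y =
        ∑ s, ∑ u, q y' s * P₁ y' u * W (f u s) s y := by
  simp only [hP₂, hW]
  refine ⟨⟨fun y' => inducedInput_nonneg (hq_nonneg y') (hP₁_nonneg y') f, fun y' => ?_⟩,
    fun y' y => sum_sum_inducedInput_mul_add (hq_sum y') f (P₁ y') (A · y) (B · y)⟩
  rw [sum_inducedInput, hq_sum, hP₁_sum, one_mul]

end InducedInput

theorem inducedInput_not {R S U : Type*} [CommRing R] [Fintype S] [Fintype U]
    {q : S → R} {p : U → R} (hq : ∑ s, q s = 1) (hp : ∑ u, p u = 1) (f : U → S → Bool) (x : Bool) :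
    inducedInput q f p (!x) = 1 - inducedInput q f p x := by
  have total : inducedInput q f p true + inducedInput q f p false = 1 := by
    rw [← Fintype.sum_bool, sum_inducedInput, hq, hp, one_mul]
  cases x
  · exact eq_sub_of_add_eq total
  · exact eq_sub_of_add_eq' total

theorem Qch_eq_add (α : ℝ) (x s' y : Bool) :
    Qch α x s' y = (1 - α) * (if y = x then 1 else 0) + α * (if y = s' then 1 else 0) := by
  cases x <;> cases s' <;> cases y <;> simp [Qch]

theorem Qst_nonneg {η : ℝ} (hη0 : 0 ≤ η) (hη1 : η ≤ 1) (y s : Bool) : 0 ≤ Qst η y s := by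
  cases y <;> cases s <;> simp [Qst, hη0, hη1]

theorem sum_Qst (η : ℝ) (y : Bool) : ∑ s, Qst η y s = 1 := by
  cases y <;> simp [Qst]

section Strategies

variable (η : ℝ) (p : Fin 4 → ℝ)

theorem inducedInput_Qst_false_true :
    inducedInput (Qst η false) strat p true = p 2 + p 3 := by
  simp [inducedInput, sum_filter, Fin.sum_univ_four, Qst, strat]

theorem inducedInput_Qst_true_false :
    inducedInput (Qst η true) strat p false = p 0 + η * p 1 + (1 - η) * p 2 := by
  calc inducedInput (Qst η true) strat p false
      = (1 - η) * (p 0 + p 2) + η * (p 0 + p 1) := by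
        simp [inducedInput, sum_filter, Fin.sum_univ_four, Qst, strat, mul_add]
    _ = p 0 + η * p 1 + (1 - η) * p 2 := by ring

variable {p}

theorem inducedInput_Qst_false_false (hp : ∑ u, p u = 1) :
    inducedInput (Qst η false) strat p false = 1 - (p 2 + p 3) := by
  rw [← inducedInput_Qst_false_true η p, ← inducedInput_not (sum_Qst η _) hp, Bool.not_true]

theorem inducedInput_Qst_true_true (hp : ∑ u, p u = 1) :
    inducedInput (Qst η true) strat p true = 1 - (p 0 + η * p 1 + (1 - η) * p 2) := by
  rw [← inducedInput_Qst_true_false, ← inducedInput_not (sum_Qst η _) hp, Bool.not_false]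

end Strategies

/-- for the noisy-POST(α,η) channel, the constructed input distribution
`P₂(x|y')` is a valid conditional PMF and induces the same output transition probability
as the strategy distribution `P₁(u|y')`. -/
theorem noisyPost_kernel_preserved (α η : ℝ) (hα0 : 0 ≤ α) (hα1 : α ≤ 1)
    (hη0 : 0 ≤ η) (hη1 : η ≤ 1)
    (P₁ : Bool → Fin 4 → ℝ)
    (h₁nn : ∀ y' u, 0 ≤ P₁ y' u) (h₁sum : ∀ y', ∑ u : Fin 4, P₁ y' u = 1)
    (P₂ : Bool → Bool → ℝ)
    (hP₂10 : P₂ false true = P₁ false 2 + P₁ false 3)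
    (hP₂00 : P₂ false false = 1 - (P₁ false 2 + P₁ false 3))
    (hP₂01 : P₂ true false = P₁ true 0 + η * P₁ true 1 + (1 - η) * P₁ true 2)
    (hP₂11 : P₂ true true = 1 - (P₁ true 0 + η * P₁ true 1 + (1 - η) * P₁ true 2)) :
    ((∀ y' x, 0 ≤ P₂ y' x) ∧ (∀ y', ∑ x : Bool, P₂ y' x = 1)) ∧
      ∀ y' y, outKernelX α η P₂ y' y = outKernelU α η P₁ y' y := by
  refine noisyPost_kernel_preserved_general (Qst_nonneg hη0 hη1) (sum_Qst η) (Qch_eq_add α) strat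
    h₁nn h₁sum ?_
  rintro (_ | _) (_ | _)
  · rw [hP₂00, inducedInput_Qst_false_false η (h₁sum false)]
  · rw [hP₂10, inducedInput_Qst_false_true]
  · rw [hP₂01, inducedInput_Qst_true_false]
  · rw [hP₂11, inducedInput_Qst_true_true η (h₁sum true)]
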